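/- arXiv:2505.20851 — 2 statements merged into one kernel-verified Lean document; each statement's English description precedes it below -/
import Mathlib

section
/- DDC ≤ 2.247307, i.e. every Sidon set S of positive integers satisfies ∑_{s∈S} 1/s ≤ 2.247307. -/
/-!
The proof is linear programming duality. Slide a window of length `h` along the integers and let
`W` be the number of elements of the Sidon set in the window ending at `u`. A pair at distance
`d < h` lies in `h - d` windows and every distance occurs at most once, so `W.choose 2` summed over
all `u` is at most `h (h - 1) / 2` (`sum_choose_window_le`). Since `W.choose 2` is the sum of
`max (W - j) 0` over `j ≥ 1`, it is at least the sum of `W - j` over any set of indices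
`j ≥ 1`, which may be chosen depending on `u`; taking `j` for the `u` in an interval `[L_j, T_j)`
turns the quadratic inequality into one that is linear in the set (`sum_overlap_le`).

The list `cuts` consists of twelve such inequalities, with `h` between `3` and `127`, and
multipliers found by numerical optimization. Their combination reads `∑ w(s) ≤ C`, whence
`∑ 1 / s ≤ C + ∑ max (1 / s - w(s)) 0` for the elements `s ≤ 4096`, where the last sum extends over
all integers `s ≤ 4096`. The right-hand side is a finite computation (`cost_add_deficitSum_le`)
and is less than `2.2` (`sum_small_le`). For the elements above `X = 4096` it is enough that the
`n`-th of them exceeds both `X` and `n (n - 1) / 2`; their reciprocals sum to at most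
`m / X + 2 / m` for every `m ≥ 1` (`sum_large_le`), which is less than `0.0443` for `m = 90`.
-/

open scoped ENNReal

/-- A set of positive integers is a Sidon set: all pairwise sums `s + t`
with `s ≤ t` are distinct. -/
def IsSidon (S : Set ℕ) : Prop :=
  (∀ s ∈ S, 0 < s) ∧
    ∀ a ∈ S, ∀ b ∈ S, ∀ c ∈ S, ∀ d ∈ S,
      a ≤ b → c ≤ d → a + b = c + d → a = c ∧ b = d

open Finset

/-! ### Pairs and their differences -/

/-- The pairs `(s, t)` with `s < t` of elements of `A`. -/
def pairs (A : Finset ℕ) : Finset (ℕ × ℕ) := (A ×ˢ A).filter fun p => p.1 < p.2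

theorem card_pairs (A : Finset ℕ) : #(pairs A) = (#A).choose 2 := by
  induction A using Finset.induction_on_max with
  | empty => simp [pairs]
  | insert a B hB ih =>
    have ha : a ∉ B := fun h => lt_irrefl _ (hB a h)
    have hsplit : pairs (insert a B) = pairs B ∪ B.image fun s => (s, a) := by
      ext ⟨x, y⟩
      simp only [pairs, mem_filter, mem_product, mem_insert, mem_union, mem_image, Prod.mk.injEq]
      constructor
      · rintro ⟨⟨hx, hy⟩, hxy⟩
        rcases hx with rfl | hx <;> rcases hy with rfl | hy
        · omega
        · have := hB y hy; omega
        · exact Or.inr ⟨x, hx, rfl, rfl⟩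
        · exact Or.inl ⟨⟨hx, hy⟩, hxy⟩
      · rintro (⟨⟨hx, hy⟩, hxy⟩ | ⟨s, hs, rfl, rfl⟩)
        · exact ⟨⟨Or.inr hx, Or.inr hy⟩, hxy⟩
        · exact ⟨⟨Or.inr hs, Or.inl rfl⟩, hB s hs⟩
    have hdisj : Disjoint (pairs B) (B.image fun s => (s, a)) := by
      rw [Finset.disjoint_left]
      rintro ⟨x, y⟩ h1 h2
      simp only [pairs, mem_filter, mem_product, mem_image, Prod.mk.injEq] at h1 h2
      obtain ⟨s, -, -, rfl⟩ := h2
      exact ha h1.1.2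
    rw [hsplit, card_union_of_disjoint hdisj, ih, card_insert_of_notMem ha,
      card_image_of_injective _ (fun x y h => (Prod.mk.inj h).1), Nat.choose_succ_succ' (#B) 1]
    simp [add_comm]

/-- In a Sidon set every positive integer is the difference of at most one pair. -/
theorem IsSidon.injOn_sub {S : Set ℕ} (hS : IsSidon S) {A : Finset ℕ} (hA : ↑A ⊆ S) :
    Set.InjOn (fun p : ℕ × ℕ => p.2 - p.1) (pairs A) := by
  rintro ⟨s, t⟩ h1 ⟨s', t'⟩ h2 h
  simp only [pairs, coe_filter, mem_product, Set.mem_ofPred_eq] at h1 h2 h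
  obtain ⟨⟨hs, ht⟩, hst⟩ := h1
  obtain ⟨⟨hs', ht'⟩, hst'⟩ := h2
  replace hs := hA hs
  replace ht := hA ht
  replace hs' := hA hs'
  replace ht' := hA ht'
  have key := hS.2
  rcases le_total t s' with h3 | h3 <;> rcases le_total s t' with h4 | h4
  · have := key t ht s' hs' s hs t' ht' h3 h4 (by omega)
    omega
  · have := key t ht s' hs' t' ht' s hs h3 h4 (by omega)
    ext <;> simp only <;> omega
  · have := key s' hs' t ht s hs t' ht' h3 h4 (by omega)
    ext <;> simp only <;> omega
  · have := key s' hs' t ht t' ht' s hs h3 h4 (by omega)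
    omega

/-! ### Sliding windows -/

/-- The elements of `A` in the window `(u - h, u]` of length `h` ending at `u`. Indexing windows
by their right end keeps those that overhang `0` on the left within `ℕ`. -/
def window (A : Finset ℕ) (h u : ℕ) : Finset ℕ := A.filter fun s => s ≤ u ∧ u < s + h

/-- A pair at distance `d < h` lies in `h - d` windows of length `h`, and the distances of different
pairs are different, so all windows together contain at most `∑_{0 < d < h} (h - d)` pairs. -/
theorem sum_choose_window_le {S : Set ℕ} (hS : IsSidon S) {A : Finset ℕ} (hA : ↑A ⊆ S)
    (h M : ℕ) : ∑ u ∈ range M, (#(window A h u)).choose 2 ≤ h * (h - 1) / 2 := by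
  have h1 : ∀ u, #(pairs (window A h u)) =
      ∑ p ∈ pairs A, if p.2 ≤ u ∧ u < p.1 + h then 1 else 0 := by
    intro u
    rw [← card_filter]
    congr 1
    ext ⟨s, t⟩
    simp only [pairs, window, mem_filter, mem_product]
    constructor
    · rintro ⟨⟨⟨a, b, c⟩, d, e, f⟩, g⟩
      exact ⟨⟨⟨a, d⟩, g⟩, e, c⟩
    · rintro ⟨⟨⟨a, d⟩, g⟩, e, c⟩
      exact ⟨⟨⟨a, by omega, c⟩, d, e, by omega⟩, g⟩
  calc ∑ u ∈ range M, (#(window A h u)).choose 2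
      = ∑ p ∈ pairs A, ∑ u ∈ range M, if p.2 ≤ u ∧ u < p.1 + h then 1 else 0 := by
        rw [sum_comm]
        exact sum_congr rfl fun u _ => by rw [← card_pairs, h1]
    _ ≤ ∑ p ∈ pairs A, (h - (p.2 - p.1)) := by
        refine sum_le_sum fun p hp => ?_
        rw [← card_filter]
        calc _ ≤ #(Ico p.2 (p.1 + h)) := card_le_card fun u hu => by
              simp only [mem_filter, mem_Ico] at hu ⊢
              exact hu.2
          _ ≤ _ := by
            rw [Nat.card_Ico]
            simp only [pairs, mem_filter] at hp
            omega
    _ = ∑ d ∈ (pairs A).image (fun p => p.2 - p.1), (h - d) :=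
        (sum_image (hS.injOn_sub hA)).symm
    _ ≤ ∑ d ∈ Ico 1 (h + 1), (h - d) := by
        -- distances `d > h` contribute nothing, by truncated subtraction
        refine sum_le_sum_of_ne_zero fun d hd hne => ?_
        simp only [mem_image, pairs, mem_filter] at hd
        obtain ⟨p, hp, rfl⟩ := hd
        rw [mem_Ico]
        omega
    _ = ∑ j ∈ range h, j := by
        rw [sum_Ico_eq_sum_range, ← sum_range_reflect (fun j => j) h]
        refine sum_congr (by simp) fun j hj => ?_
        rw [mem_range] at hj
        omega
    _ = _ := sum_range_id h

/-! ### Linear inequalities from windows -/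

/-- The number of intervals `[L, T)` of the list `l` that contain `u`. -/
def active (u : ℕ) : List (ℕ × ℕ) → ℕ
  | [] => 0
  | p :: l => (if p.1 ≤ u ∧ u < p.2 then 1 else 0) + active u l

/-- The sum of the indices of the intervals of `l` that contain `u`, the head having index `i`. -/
def activeCost (u : ℕ) : ℕ → List (ℕ × ℕ) → ℕ
  | _, [] => 0
  | i, p :: l => (if p.1 ≤ u ∧ u < p.2 then i else 0) + activeCost u (i + 1) l

/-- The total overlap of `[s, s + h)` with the intervals `[L, T)` of the list `l`; for each of them
`(x - L) - (x - T)` counts its elements below `x`. The sum stops at the first interval with `T ≤ s`;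
if the right ends `T` are decreasing, nothing is lost, and most evaluations become short. -/
def overlap (h s : ℕ) : List (ℕ × ℕ) → ℕ
  | [] => 0
  | p :: l => if p.2 ≤ s then 0 else
      ((s + h - p.1) - (s + h - p.2)) - ((s - p.1) - (s - p.2)) + overlap h s l

/-- The total length of the intervals of `l`, each weighted by its index, the head having
index `i`. -/
def levelCost : ℕ → List (ℕ × ℕ) → ℕ
  | _, [] => 0
  | i, p :: l => i * (p.2 - p.1) + levelCost (i + 1) l

/-- Linearization of a binomial coefficient: `W.choose 2 = ∑ j ≥ 1, max (W - j) 0` is at least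
the sum of `W - j` over any set of indices `j ≥ 1`. For the induction the indices start at `i`. -/
theorem active_mul_le (u W : ℕ) (l : List (ℕ × ℕ)) (i : ℕ) :
    active u l * W ≤ (W + 1 - i).choose 2 + activeCost u i l := by
  induction l generalizing i with
  | nil => simp [active]
  | cons p l ih =>
    have h1 := ih (i + 1)
    have h2 : (W + 1 - (i + 1)).choose 2 + (W - i) = (W + 1 - i).choose 2 := by
      rcases le_total i W with h | h
      · obtain ⟨k, rfl⟩ := Nat.exists_eq_add_of_le h
        rw [show i + k + 1 - (i + 1) = k by omega, show i + k + 1 - i = k + 1 by omega,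
          show i + k - i = k by omega, Nat.choose_succ_succ' k 1]
        simp [add_comm]
      · rw [show W + 1 - (i + 1) = 0 by omega, show W - i = 0 by omega]
        rcases Nat.le_one_iff_eq_zero_or_eq_one.1 (show W + 1 - i ≤ 1 by omega) with h | h <;>
          simp [h]
    simp only [active, activeCost]
    split_ifs
    · rw [add_mul, one_mul]
      omega
    · rw [zero_add, zero_add]
      omega

/-- Each `s` lies in at least `overlap h s l` of the windows ending in the intervals of `l`, counted with
multiplicity. -/
theorem overlap_le (h s M : ℕ) (hM : s + h ≤ M) (l : List (ℕ × ℕ)) :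
    overlap h s l ≤ ∑ u ∈ range M, if s ≤ u ∧ u < s + h then active u l else 0 := by
  induction l with
  | nil => simp [overlap]
  | cons p l ih =>
    have h1 : ∑ u ∈ range M, (if s ≤ u ∧ u < s + h then active u (p :: l) else 0) =
        (∑ u ∈ range M, if (s ≤ u ∧ u < s + h) ∧ p.1 ≤ u ∧ u < p.2 then 1 else 0) +
          ∑ u ∈ range M, if s ≤ u ∧ u < s + h then active u l else 0 := by
      rw [← sum_add_distrib]
      refine sum_congr rfl fun u _ => ?_
      by_cases h2 : s ≤ u ∧ u < s + h <;> simp [h2, active]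
    have h3 : #(Ico (max s p.1) (min (s + h) p.2)) ≤
        ∑ u ∈ range M, if (s ≤ u ∧ u < s + h) ∧ p.1 ≤ u ∧ u < p.2 then 1 else 0 := by
      rw [← card_filter]
      refine card_le_card fun u hu => ?_
      simp only [mem_Ico, mem_filter, mem_range] at hu ⊢
      omega
    rw [Nat.card_Ico] at h3
    rw [h1, overlap]
    split_ifs
    · exact Nat.zero_le _
    · omega

theorem sum_activeCost_le (M : ℕ) (l : List (ℕ × ℕ)) (i : ℕ) :
    ∑ u ∈ range M, activeCost u i l ≤ levelCost i l := by
  induction l generalizing i with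
  | nil => simp [activeCost]
  | cons p l ih =>
    simp only [activeCost, levelCost, sum_add_distrib]
    refine add_le_add ?_ (ih (i + 1))
    rw [← sum_filter, sum_const, smul_eq_mul, mul_comm]
    refine Nat.mul_le_mul_left i ?_
    calc _ ≤ #(Ico p.1 p.2) := card_le_card fun u hu => by
          simp only [mem_filter, mem_Ico] at hu ⊢
          exact hu.2
      _ = _ := Nat.card_Ico ..

/-- The linear inequality given by the windows of length `h` and the list `l`: the bound
`W.choose 2 ≥ ∑ (W - j)` over the indices `j` active at `u`, summed over all windows. -/
theorem sum_overlap_le {S : Set ℕ} (hS : IsSidon S) {A : Finset ℕ} (hA : ↑A ⊆ S)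
    (h : ℕ) (l : List (ℕ × ℕ)) :
    ∑ s ∈ A, overlap h s l ≤ h * (h - 1) / 2 + levelCost 1 l := by
  set M := A.sup id + h with hMdef
  calc ∑ s ∈ A, overlap h s l
      ≤ ∑ s ∈ A, ∑ u ∈ range M, if s ≤ u ∧ u < s + h then active u l else 0 :=
        sum_le_sum fun s hs => overlap_le h s M
          (Nat.add_le_add_right (le_sup (f := id) hs) h) l
    _ = ∑ u ∈ range M, active u l * #(window A h u) := by
        rw [sum_comm]
        refine sum_congr rfl fun u _ => ?_
        rw [← sum_filter, sum_const, smul_eq_mul, mul_comm]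
        rfl
    _ ≤ ∑ u ∈ range M, ((#(window A h u)).choose 2 + activeCost u 1 l) :=
        sum_le_sum fun u _ => by simpa using active_mul_le u (#(window A h u)) l 1
    _ ≤ _ := by
        rw [sum_add_distrib]
        exact add_le_add (sum_choose_window_le hS hA h M) (sum_activeCost_le M l 1)

/-! ### The certificate -/

/-- A linear inequality `sum_overlap_le` together with a multiplier, in units of `10⁻⁹`. -/
structure Cut where
  /-- the window length -/
  len : ℕ
  /-- the multiplier -/
  weight : ℕ
  /-- the intervals `[L, T)`: the `j`-th one holds the right ends of the windows for which
  the term `W - j` is kept, `j = 1, 2, …` -/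
  levels : List (ℕ × ℕ)

/-- An approximate dual solution of the linear program of maximizing `∑ 1 / s` subject to the window
inequalities and to each `s` being used at most once. -/
def cuts : List Cut := [
  ⟨3, 11623957, [(1, 5), (3, 4)]⟩,
  ⟨3, 27355686, [(1, 6), (2, 4)]⟩,
  ⟨7, 5272114, [(2, 13), (3, 10), (6, 8)]⟩,
  ⟨7, 2034654, [(1, 20), (3, 9), (5, 8)]⟩,
  ⟨15, 607150, [(1, 40), (2, 27), (6, 17), (9, 16)]⟩,
  ⟨15, 385537, [(2, 57), (4, 32), (6, 17), (10, 16)]⟩,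
  ⟨31, 51316, [(1, 168), (2, 88), (6, 46), (10, 35), (19, 33), (20, 32)]⟩,
  ⟨31, 46168, [(1, 233), (2, 88), (6, 48), (10, 35), (19, 33), (20, 32)]⟩,
  ⟨63, 12425, [(1, 563), (4, 297), (4, 120), (10, 111), (19, 95), (20, 73), (40, 69), (57, 65)]⟩,
  ⟨63, 1616, [(1, 2315), (3, 360), (6, 120), (10, 120), (19, 80), (20, 73), (34, 68), (57, 65)]⟩,
  ⟨127, 3166, [(1, 1815), (4, 731), (5, 417), (10, 187), (17, 184), (20, 147), (37, 142),
    (56, 137), (58, 131), (78, 129), (88, 128)]⟩,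
  ⟨127, 3391, [(2, 4168), (3, 1064), (4, 394), (10, 187), (17, 184), (21, 147), (39, 143),
    (54, 137), (58, 131), (79, 130), (88, 128)]⟩]

/-- The coefficient of `s` in the combined inequality. -/
def coeff (s : ℕ) : List Cut → ℕ
  | [] => 0
  | c :: l => c.weight * overlap c.len s c.levels + coeff s l

/-- The right-hand side of the combined inequality. -/
def cost : List Cut → ℕ
  | [] => 0
  | c :: l => c.weight * (c.len * (c.len - 1) / 2 + levelCost 1 c.levels) + cost l

theorem sum_coeff_le {S : Set ℕ} (hS : IsSidon S) {A : Finset ℕ} (hA : ↑A ⊆ S) (l : List Cut) :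
    ∑ s ∈ A, coeff s l ≤ cost l := by
  induction l with
  | nil => simp [coeff]
  | cons c l ih =>
    simp only [coeff, cost, sum_add_distrib, ← mul_sum]
    exact add_le_add (Nat.mul_le_mul_left _ (sum_overlap_le hS hA _ _)) ih

/-- The part of `10⁹ / s`, rounded up, that the combined inequality does not cover. Matching on `s`
makes the kernel evaluate it to a numeral before it is substituted. -/
def deficit : ℕ → ℕ
  | 0 => 0
  | s + 1 => 10 ^ 9 / (s + 1) + 1 - coeff (s + 1) cuts

/-- The sum of `deficit` over `[a, a + 2 ^ k)`, split in halves so that evaluating it takes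
recursion of depth `k` only. -/
def deficitSum : ℕ → ℕ → ℕ
  | 0, a => deficit a
  | k + 1, a => deficitSum k a + deficitSum k (a + 2 ^ k)

theorem deficitSum_eq (k a : ℕ) : deficitSum k a = ∑ s ∈ Ico a (a + 2 ^ k), deficit s := by
  induction k generalizing a with
  | zero => simp [deficitSum]
  | succ k ih =>
    rw [deficitSum, ih, ih, sum_Ico_consecutive _ (Nat.le_add_right _ _) (Nat.le_add_right _ _), pow_succ]
    congr 2
    ring

theorem cost_add_deficitSum_le : cost cuts + deficitSum 12 1 ≤ 2200000000 := by
  decide +kernel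

/-- The elements up to `4096` contribute at most `2.2`. -/
theorem sum_small_le {S : Set ℕ} (hS : IsSidon S) {A : Finset ℕ} (hA : ↑A ⊆ S)
    (hA' : ∀ s ∈ A, s ≤ 4096) : ∑ s ∈ A, (1 : ℝ) / s ≤ 2.2 := by
  have hpos : ∀ s ∈ A, 0 < s := fun s hs => hS.1 s (hA hs)
  have h1 : ∀ s ∈ A, (10 : ℝ) ^ 9 * (1 / s) ≤ ((coeff s cuts + deficit s : ℕ) : ℝ) := by
    intro s hs
    have hs0 : (0 : ℝ) < s := by exact_mod_cast hpos s hs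
    have h2 : 10 ^ 9 / s + 1 ≤ coeff s cuts + deficit s := by
      obtain ⟨k, rfl⟩ := Nat.exists_eq_succ_of_ne_zero (hpos s hs).ne'
      rw [Nat.succ_eq_add_one, deficit]
      omega
    have h3 : 10 ^ 9 ≤ s * (coeff s cuts + deficit s) :=
      (Nat.lt_mul_div_succ (10 ^ 9) (hpos s hs)).le.trans (Nat.mul_le_mul_left s h2)
    rw [mul_one_div, div_le_iff₀ hs0, mul_comm]
    exact_mod_cast h3
  have h4 : ∑ s ∈ A, deficit s ≤ deficitSum 12 1 := by
    rw [deficitSum_eq]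
    refine sum_le_sum_of_subset fun s hs => ?_
    have := hpos s hs
    have := hA' s hs
    rw [mem_Ico]
    omega
  have h5 : ∑ s ∈ A, (coeff s cuts + deficit s) ≤ 2200000000 := by
    rw [sum_add_distrib]
    exact (add_le_add (sum_coeff_le hS hA cuts) h4).trans cost_add_deficitSum_le
  have h6 : (10 : ℝ) ^ 9 * ∑ s ∈ A, (1 : ℝ) / s ≤ 2200000000 := by
    rw [mul_sum]
    refine (sum_le_sum h1).trans ?_
    rw [← Nat.cast_sum]
    exact_mod_cast h5
  linarith

/-! ### Large elements -/

/-- The differences of a Sidon set with `n` elements and maximum `b` are distinct positive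
integers below `b`. -/
theorem choose_lt {S : Set ℕ} (hS : IsSidon S) {A : Finset ℕ} (hA : ↑A ⊆ S) {b : ℕ}
    (hb : 0 < b) (hAb : ∀ s ∈ A, s ≤ b) : (#A).choose 2 < b := by
  have h1 : (#A).choose 2 ≤ #(Ico 1 b) := by
    rw [← card_pairs]
    refine card_le_card_of_injOn _ (fun p hp => ?_) (hS.injOn_sub hA)
    simp only [pairs, coe_filter, mem_product, Set.mem_ofPred_eq] at hp
    have := hAb _ hp.1.2
    have := hS.1 _ (hA hp.1.1)
    simp only [coe_Ico, Set.mem_Ico]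
    omega
  rw [Nat.card_Ico] at h1
  omega

/-- Beyond the first `m` elements, the `n`-th one exceeds `n (n - 1) / 2`, and the reciprocals
`2 / (n (n - 1)) = 2 / (n - 1) - 2 / n` telescope. -/
theorem sum_large_le_aux {S : Set ℕ} (hS : IsSidon S) {X m : ℕ} (hX : 0 < X) (hm : 0 < m)
    (n : ℕ) (hn : m ≤ n) : ∀ A : Finset ℕ, ↑A ⊆ S → (∀ s ∈ A, X < s) → #A = n →
      ∑ s ∈ A, (1 : ℝ) / s ≤ m / X + 2 / m - 2 / n := by
  have hX' : (0 : ℝ) < X := by exact_mod_cast hX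
  induction n, hn using Nat.le_induction with
  | base =>
    intro A _ hAX hcard
    calc ∑ s ∈ A, (1 : ℝ) / s ≤ ∑ s ∈ A, (1 : ℝ) / X := by
          refine sum_le_sum fun s hs => one_div_le_one_div_of_le hX' ?_
          exact_mod_cast (hAX s hs).le
      _ = _ := by
          rw [sum_const, hcard, nsmul_eq_mul]
          ring
  | succ n hn ih =>
    intro A hA hAX hcard
    have hne : A.Nonempty := card_pos.1 (by omega)
    have hmem := A.max'_mem hne
    set b := A.max' hne
    have hb : (n + 1).choose 2 < b := hcard ▸
      choose_lt hS hA (hS.1 b (hA hmem)) fun s hs => A.le_max' s hs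
    have h1 := ih (A.erase b) (fun s hs => hA (mem_of_mem_erase hs))
      (fun s hs => hAX s (mem_of_mem_erase hs)) (by rw [card_erase_of_mem hmem]; omega)
    have hn0 : (0 : ℝ) < n := by exact_mod_cast hm.trans_le hn
    have h2 : (1 : ℝ) / b ≤ 2 / n - 2 / (n + 1) := by
      have h3 : ((n : ℝ) + 1) * n / 2 ≤ b := by
        have h4 : (((n + 1).choose 2 : ℕ) : ℝ) ≤ b := by exact_mod_cast hb.le
        rw [Nat.cast_choose_two] at h4
        push_cast at h4
        simpa using h4
      calc (1 : ℝ) / b ≤ 1 / (((n : ℝ) + 1) * n / 2) :=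
            one_div_le_one_div_of_le (by positivity) h3
        _ = _ := by
            field_simp
            ring
    rw [← add_sum_erase A _ hmem]
    push_cast
    linarith

theorem sum_large_le {S : Set ℕ} (hS : IsSidon S) {X m : ℕ} (hX : 0 < X) (hm : 0 < m)
    {A : Finset ℕ} (hA : ↑A ⊆ S) (hAX : ∀ s ∈ A, X < s) :
    ∑ s ∈ A, (1 : ℝ) / s ≤ m / X + 2 / m := by
  have hX' : (0 : ℝ) < X := by exact_mod_cast hX
  rcases le_total m (#A) with h | h
  · have h1 := sum_large_le_aux hS hX hm (#A) h A hA hAX rfl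
    have h2 : (0 : ℝ) ≤ 2 / (#A : ℝ) := by positivity
    linarith
  · calc ∑ s ∈ A, (1 : ℝ) / s ≤ ∑ s ∈ A, (1 : ℝ) / X := by
          refine sum_le_sum fun s hs => one_div_le_one_div_of_le hX' ?_
          exact_mod_cast (hAX s hs).le
      _ = (#A : ℝ) / X := by
          rw [sum_const, nsmul_eq_mul]
          ring
      _ ≤ (m : ℝ) / X := by
          gcongr
      _ ≤ _ := le_add_of_nonneg_right (by positivity)

/-! ### The bound -/

theorem sum_finset_le {S : Set ℕ} (hS : IsSidon S) {A : Finset ℕ} (hA : ↑A ⊆ S) :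
    ∑ s ∈ A, (1 : ℝ) / s ≤ 2.247307 := by
  have h1 : ∑ s ∈ A with s ≤ 4096, (1 : ℝ) / s ≤ 2.2 :=
    sum_small_le hS (fun s hs => hA (mem_of_mem_filter s hs)) fun s hs => (mem_filter.1 hs).2
  -- `m = 90` is close to the minimizer `√(2 X)` of `m / X + 2 / m`
  have h2 : ∑ s ∈ A with ¬ s ≤ 4096, (1 : ℝ) / s ≤ (90 : ℕ) / (4096 : ℕ) + 2 / (90 : ℕ) :=
    sum_large_le hS (by norm_num) (by norm_num) (fun s hs => hA (mem_of_mem_filter s hs))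
      fun s hs => not_le.1 (mem_filter.1 hs).2
  rw [← sum_filter_add_sum_filter_not A (fun s => s ≤ 4096)]
  refine (add_le_add h1 h2).trans ?_
  norm_num

theorem DDC_le (S : Set ℕ) (hS : IsSidon S) :
    (∑' s : S, (1 : ℝ≥0∞) / (s : ℕ)) ≤ ENNReal.ofReal 2.247307 := by
  rw [ENNReal.tsum_eq_iSup_sum]
  refine iSup_le fun B => ?_
  have h1 : ∀ s ∈ B, (1 : ℝ≥0∞) / ((s : ℕ) : ℝ≥0∞) = ENNReal.ofReal (1 / ((s : ℕ) : ℝ)) := by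
    intro s _
    have hs : (0 : ℝ) < ((s : ℕ) : ℝ) := by exact_mod_cast hS.1 s s.2
    rw [ENNReal.ofReal_div_of_pos hs, ENNReal.ofReal_one, ENNReal.ofReal_natCast]
  rw [sum_congr rfl h1, ← ENNReal.ofReal_sum_of_nonneg fun s _ => by positivity]
  refine ENNReal.ofReal_le_ofReal ?_
  have h2 := sum_finset_le hS (A := B.map (Function.Embedding.subtype _)) (by
    intro s hs
    simp only [coe_map, Set.mem_image] at hs
    obtain ⟨x, -, rfl⟩ := hs
    exact x.2)
  rw [sum_map] at h2
  exact h2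
end

section
/- For every Sidon set S of positive integers and every positive integer n, ∑_{s∈S, s≥n} 1/s ≤ π/√(2n). -/
/-!
It suffices to bound the reciprocal sum of a finite increasing sequence `a₁ < a₂ < ⋯` in `S` with
`a₁ ≥ n`. The positive differences of a Sidon set are distinct, and `N` distinct positive integers
sum to at least `N(N+1)/2`. Applied to the differences `a_{i+1} - a_i` alone, this gives
`a_k ≥ n + k(k-1)/2`, and then
`∑ 1 / (n + k(k+1)/2)` over `k ≥ 0` is compared with the telescoping sum of
`(2/w) (arctan ((k+1)/w) - arctan (k/w))`, `w = √(2n)`, whose total is `π / √(2n)`. This just fails,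
because `arctan a` is slightly smaller than `a` (`arctan_step`).

The loss is recovered by also using the differences `a_{i+2} - a_i`. The `2k - 3` differences of the
two kinds sum to `3 (a_k - a₁)` minus the two extreme gaps, so `a_k - a₁ ≥ (2k² - 5k + 6) / 3`
(`add_spread_le`), which exceeds `k(k-1)/2` from `k = 5` on. There are three ranges of `n`.

* `n ≥ 10`: the cubic error of the arctangent in the first four terms is paid for by the next four
  terms (`sum_eight`), and every later term is fine by itself (`term_le_step`).
* `2 ≤ n ≤ 9`: the sum of the bounds `1 / (n + spread k)` is evaluated with `60` terms and a
  telescoping tail (`scaledSum_small`, `sum_range_inv_le`).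
* `n = 1`: if `1 ∉ S`, the bound for `n = 2` applies. If `1 ∈ S`, a finite branch-and-bound search
  over the smallest elements of `S` (`check_root`, `check_sound`) shows that the sum is at most
  `2.2213 < π / √2`. Its upper bound for a branch uses, besides the spread, that the consecutive gaps
  above the elements chosen so far avoid all differences of those elements
  (`add_sub_le_of_prefix`).
-/


open scoped ENNReal

/-! ### Distinct differences -/

/-- `N` distinct positive integers sum to at least `1 + 2 + ⋯ + N`. -/
theorem card_mul_succ_le_two_mul_sum (T : Finset ℕ) (hT : ∀ x ∈ T, 0 < x) :
    T.card * (T.card + 1) ≤ 2 * ∑ x ∈ T, x := by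
  induction T using Finset.induction_on_max with
  | empty => simp
  | insert a T hlt ih =>
    have ha : a ∉ T := fun h => lt_irrefl _ (hlt a h)
    have hcard : T.card + 1 ≤ a := by
      have hsub : insert a T ⊆ Finset.Icc 1 a := by
        intro x hx
        rw [Finset.mem_Icc]
        refine ⟨hT x hx, ?_⟩
        rcases Finset.mem_insert.1 hx with rfl | h
        · exact le_rfl
        · exact (hlt x h).le
      have := Finset.card_le_card hsub
      rw [Finset.card_insert_of_notMem ha, Nat.card_Icc] at this
      omega
    have ih' := ih fun x hx => hT x (Finset.mem_insert_of_mem hx)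
    rw [Finset.card_insert_of_notMem ha, Finset.sum_insert ha]
    nlinarith

theorem length_mul_succ_le_two_mul_sum {T : List ℕ} (hd : T.Nodup) (hT : ∀ x ∈ T, 0 < x) :
    T.length * (T.length + 1) ≤ 2 * T.sum := by
  have h := card_mul_succ_le_two_mul_sum T.toFinset (by simpa using hT)
  rwa [List.toFinset_card_of_nodup hd, List.sum_toFinset (fun x => x) hd, List.map_id'] at h

/-- `δ` is a positive difference of two members of `l`. -/
def IsDiff (l : List ℕ) (δ : ℕ) : Prop := ∃ a ∈ l, ∃ b ∈ l, b < a ∧ δ = a - b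

theorem IsDiff.pos {l : List ℕ} {δ : ℕ} (h : IsDiff l δ) : 0 < δ := by
  obtain ⟨a, -, b, -, hlt, rfl⟩ := h; omega

theorem IsDiff.mono {l l' : List ℕ} (hl : ∀ x ∈ l, x ∈ l') {δ : ℕ} (h : IsDiff l δ) :
    IsDiff l' δ := by
  obtain ⟨a, ha, b, hb, h⟩ := h; exact ⟨a, hl a ha, b, hl b hb, h⟩

/-- `l` is a strictly decreasing list of elements of `S`. The largest element comes first, so
that a new, larger element is added by `::`. -/
structure Ladder (S : Set ℕ) (l : List ℕ) : Prop where
  desc : l.Pairwise (· > ·)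
  mem : ∀ x ∈ l, x ∈ S

theorem Ladder.of_append {S : Set ℕ} {u l : List ℕ} (h : Ladder S (u ++ l)) : Ladder S l :=
  ⟨(List.pairwise_append.1 h.desc).2.1, fun x hx => h.mem x (List.mem_append_right _ hx)⟩

theorem Ladder.of_cons {S : Set ℕ} {x : ℕ} {l : List ℕ} (h : Ladder S (x :: l)) : Ladder S l :=
  Ladder.of_append (u := [x]) h

theorem Ladder.lt {S : Set ℕ} {x y : ℕ} {l : List ℕ} (h : Ladder S (x :: l)) (hy : y ∈ l) : y < x :=
  (List.pairwise_cons.1 h.desc).1 y hy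

/-- The Sidon property in the form used throughout: the differences between a new largest
element and the old elements are all new. -/
theorem Ladder.not_isDiff {S : Set ℕ} (hS : IsSidon S) {w y : ℕ} {l : List ℕ}
    (h : Ladder S (w :: l)) (hy : y ∈ l) : ¬ IsDiff l (w - y) := by
  rintro ⟨a, ha, b, hb, hlt, he⟩
  have hwS := h.mem w (by simp)
  have hS' : ∀ z ∈ l, z ∈ S := fun z hz => h.mem z (by simp [hz])
  have h1 := h.lt hy
  have h2 := h.lt ha
  -- `w - y = a - b` is an equality of sums `b + w = y + a`.
  have key : b + w = min y a + max y a := by rw [min_add_max]; omega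
  have := hS.2 b (hS' b hb) w hwS (min y a) ?_ (max y a) ?_ (by omega) (by omega) key
  · omega
  · rcases min_choice y a with h | h <;> rw [h] <;> simp [hS', hy, ha]
  · rcases max_choice y a with h | h <;> rw [h] <;> simp [hS', hy, ha]

/-- Among the elements `a₁ < ⋯ < a_k` of a ladder, the `2k - 3` differences `a_{i+1} - a_i` and
`a_{i+2} - a_i` are distinct, and they sum to `3 (a_k - a₁) - e - (a_k - a_{k-1})`, where
`e = a₂ - a₁` is the lowest gap. Here `T` lists them, `m = a₁`, and `k = r.length + 3`. The two
gaps subtracted are distinct, which is worth an extra `1` in `add_spread_le`. -/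
theorem exists_second_order {S : Set ℕ} (hS : IsSidon S) :
    ∀ (r : List ℕ) (x y z : ℕ), Ladder S (x :: y :: z :: r) →
    ∃ m ∈ x :: y :: z :: r, ∃ e, ∃ T : List ℕ, T.Nodup ∧
      (∀ δ ∈ T, IsDiff (x :: y :: z :: r) δ) ∧ e ∈ T ∧ e ≠ x - y ∧
      T.length = 2 * r.length + 3 ∧ T.sum + e + (x - y) + 3 * m = 3 * x := by
  intro r
  induction r with
  | nil =>
    intro x y z h
    have hxy : y < x := h.lt (by simp)
    have hyz : z < y := h.of_cons.lt (by simp)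
    have hne : x - y ≠ y - z := fun he =>
      h.not_isDiff hS (y := y) (by simp) ⟨y, by simp, z, by simp, hyz, he⟩
    refine ⟨z, by simp, y - z, [x - y, y - z, x - z], ?_, ?_, by simp, hne.symm, by simp, ?_⟩
    · simp; omega
    · have : ∀ δ, (δ = x - y ∨ δ = y - z ∨ δ = x - z) → IsDiff [x, y, z] δ := by
        rintro δ (rfl | rfl | rfl)
        · exact ⟨x, by simp, y, by simp, hxy, rfl⟩
        · exact ⟨y, by simp, z, by simp, hyz, rfl⟩
        · exact ⟨x, by simp, z, by simp, hyz.trans hxy, rfl⟩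
      simpa using this
    · simp; omega
  | cons v r ih =>
    intro w x y h
    obtain ⟨m, hm, e, T, hnd, hdiff, heT, -, hlen, hsum⟩ := ih x y v h.of_cons
    have hx : x < w := h.lt (by simp)
    have hy : y < x := h.of_cons.lt (by simp)
    have h1 : w - x ∉ T := fun hT => h.not_isDiff hS (by simp) (hdiff _ hT)
    have h2 : w - y ∉ T := fun hT => h.not_isDiff hS (by simp) (hdiff _ hT)
    refine ⟨m, List.mem_cons_of_mem _ hm, e, (w - x) :: (w - y) :: T, ?_, ?_, by simp [heT],
      ?_, ?_, ?_⟩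
    · refine List.nodup_cons.2 ⟨?_, List.nodup_cons.2 ⟨h2, hnd⟩⟩
      simp only [List.mem_cons, not_or]
      exact ⟨by omega, h1⟩
    · intro δ hδ
      rcases List.mem_cons.1 hδ with rfl | hδ
      · exact ⟨w, by simp, x, by simp, hx, rfl⟩
      rcases List.mem_cons.1 hδ with rfl | hδ
      · exact ⟨w, by simp, y, by simp, hy.trans hx, rfl⟩
      · exact (hdiff δ hδ).mono fun z hz => List.mem_cons_of_mem _ hz
    · rintro rfl; exact h1 heT
    · simp [hlen]; ring
    · simp only [List.sum_cons]; omega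

/-! ### Gaps forced by the Sidon property -/

/-- A lower bound for `a_k - a₁` over Sidon sets `a₁ < ⋯ < a_k`: it is `k - 1` for `k ≤ 2` and
`⌈(2k² - 5k + 6) / 3⌉` for `k ≥ 3`. In the formula `8 = 6 + 2` makes the floor a ceiling, and
`5 * k` is subtracted last so that natural subtraction never truncates. -/
def spread (k : ℕ) : ℕ := if k ≤ 2 then k - 1 else (2 * k ^ 2 + 8 - 5 * k) / 3

/-- By `exists_second_order`, `3 (a_k - a₁)` is at least the sum of the first `2k - 3` positive
integers plus `1 + 2`, the least possible value of two distinct gaps. -/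
theorem add_spread_le {S : Set ℕ} (hS : IsSidon S) {n x : ℕ} {r : List ℕ}
    (h : Ladder S (x :: r)) (hn : ∀ z ∈ x :: r, n ≤ z) : n + spread (r.length + 1) ≤ x := by
  match r, h, hn with
  | [], _, hn => simpa [spread] using hn
  | [y], h, hn =>
    have := h.lt (y := y) (by simp)
    have := hn y (by simp)
    simp [spread]; omega
  | y :: z :: r, h, hn =>
    obtain ⟨m, hm, e, T, hnd, hdiff, heT, hne, hlen, hsum⟩ := exists_second_order hS r x y z h
    have hq := length_mul_succ_le_two_mul_sum hnd fun δ hδ => (hdiff δ hδ).pos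
    have he := (hdiff e heT).pos
    have hy : y < x := h.lt (by simp)
    have hnm := hn m hm
    rw [hlen] at hq
    have hs : spread ((y :: z :: r).length + 1) =
        (2 * (r.length + 3) ^ 2 + 8 - 5 * (r.length + 3)) / 3 := by
      simp [spread]
    rw [hs]
    generalize r.length = j at *
    have h3 : 2 * (j + 3) ^ 2 + 8 - 5 * (j + 3) = 2 * j ^ 2 + 7 * j + 11 := by
      have : 2 * (j + 3) ^ 2 + 8 = 2 * j ^ 2 + 7 * j + 11 + 5 * (j + 3) := by ring
      omega
    have h4 : (2 * j + 3) * (2 * j + 3 + 1) = 2 * (2 * j ^ 2 + 7 * j + 6) := by ring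
    omega

/-- When a ladder extends `m :: P`, its consecutive gaps above `m` are distinct from each other and
from every difference of `m :: P`. Adjoining those gaps, which telescope to `x - m`, to a list `D`
of distinct differences of `m :: P` gives a longer list `T` of distinct positive integers. -/
theorem add_sub_le_of_prefix {S : Set ℕ} (hS : IsSidon S) {m : ℕ} {P D : List ℕ}
    (hD : D.Nodup) (hDP : ∀ δ ∈ D, IsDiff (m :: P) δ) :
    ∀ (r : List ℕ) (x : ℕ), Ladder S (x :: r ++ m :: P) →
      m < x ∧ ∃ T : List ℕ, T.Nodup ∧ (∀ δ ∈ T, IsDiff (x :: r ++ m :: P) δ) ∧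
        T.length = D.length + (r.length + 1) ∧ T.sum + m = D.sum + x := by
  intro r
  induction r with
  | nil =>
    intro x h
    have hx : m < x := h.lt (by simp)
    refine ⟨hx, (x - m) :: D, ?_, ?_, by simp, by simp; omega⟩
    · exact List.nodup_cons.2 ⟨fun hc => h.not_isDiff hS (by simp) (hDP _ hc), hD⟩
    · intro δ hδ
      rcases List.mem_cons.1 hδ with rfl | hδ
      · exact ⟨x, by simp, m, by simp, hx, rfl⟩
      · exact (hDP δ hδ).mono fun z hz => List.mem_cons_of_mem _ hz
  | cons y r ih =>
    intro x h
    obtain ⟨hm, T, hnd, hdiff, hlen, hsum⟩ := ih y h.of_cons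
    have hx : y < x := h.lt (by simp)
    refine ⟨hm.trans hx, (x - y) :: T, ?_, ?_, by simp [hlen]; ring, by simp; omega⟩
    · exact List.nodup_cons.2 ⟨fun hc => h.not_isDiff hS (by simp) (hdiff _ hc), hnd⟩
    · intro δ hδ
      rcases List.mem_cons.1 hδ with rfl | hδ
      · exact ⟨x, by simp, y, by simp, hx, rfl⟩
      · exact (hdiff δ hδ).mono fun z hz => List.mem_cons_of_mem _ hz

/-! ### Reciprocal sums from lower bounds on the elements -/

/-- If the `i`-th smallest element of `t` is at least `b i` for every `i ≥ 1`, the reciprocal sum of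
`t` is at most the sum of the `1 / b i`. -/
theorem sum_inv_le_of_rank {b : ℕ → ℕ} (hb : ∀ i, 0 < b (i + 1)) :
    ∀ t : List ℕ, (∀ u x r, t = u ++ x :: r → b (r.length + 1) ≤ x) →
      (t.map fun x : ℕ => 1 / (x : ℝ)).sum ≤ ∑ i ∈ Finset.range t.length, 1 / (b (i + 1) : ℝ) := by
  intro t
  induction t with
  | nil => simp
  | cons x r ih =>
    intro h
    have h1 : (b (r.length + 1) : ℝ) ≤ x := by exact_mod_cast h [] x r rfl
    have h0 : (0 : ℝ) < b (r.length + 1) := by exact_mod_cast hb _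
    have h2 := ih fun u y r' e => h (x :: u) y r' (by simp [e])
    rw [List.length_cons, Finset.sum_range_succ, List.map_cons, List.sum_cons, add_comm]
    exact add_le_add h2 (one_div_le_one_div_of_le h0 h1)

/-- The tail beyond `J` telescopes: `3 b i ≥ 2i² - 5i + 6` gives
`1 / b i ≤ 6 / (4(i - 1) - 3) - 6 / (4i - 3)`. -/
theorem sum_range_inv_le {b : ℕ → ℕ} {J : ℕ} (hJ : 2 ≤ J)
    (hb : ∀ i, J < i → 2 * i ^ 2 + 6 ≤ 3 * b i + 5 * i) (N : ℕ) :
    ∑ i ∈ Finset.range N, 1 / (b (i + 1) : ℝ) ≤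
      ∑ i ∈ Finset.range J, 1 / (b (i + 1) : ℝ) + 6 / (4 * J - 3) := by
  have hJ' : (2 : ℝ) ≤ J := by exact_mod_cast hJ
  have tail : ∀ M : ℕ, ∑ i ∈ Finset.range M, 1 / (b (J + i + 1) : ℝ) ≤
      6 / (4 * J - 3) - 6 / (4 * (J + M) - 3) := by
    intro M
    induction M with
    | zero => simp
    | succ M ih =>
      rw [Finset.sum_range_succ]
      have hM : (0 : ℝ) ≤ M := M.cast_nonneg
      have h1 : 2 * ((J : ℝ) + M + 1) ^ 2 + 6 ≤ 3 * b (J + M + 1) + 5 * (J + M + 1) := by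
        exact_mod_cast hb (J + M + 1) (by omega)
      have h2 : 1 / (b (J + M + 1) : ℝ) ≤ 6 / (4 * (J + M) - 3) - 6 / (4 * (J + (M + 1)) - 3) := by
        have p1 : (0 : ℝ) < 4 * (J + M) - 3 := by linarith
        have p2 : (0 : ℝ) < 4 * (J + (M + 1)) - 3 := by linarith
        have e : 6 / (4 * ((J : ℝ) + M) - 3) - 6 / (4 * (J + (M + 1)) - 3) =
            1 / ((4 * (J + M) - 3) * (4 * (J + (M + 1)) - 3) / 24) := by
          field_simp; ring
        rw [e]
        apply one_div_le_one_div_of_le (by positivity)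
        nlinarith
      push_cast
      linarith
  have hle : ∑ i ∈ Finset.range N, 1 / (b (i + 1) : ℝ) ≤
      ∑ i ∈ Finset.range (J + N), 1 / (b (i + 1) : ℝ) :=
    Finset.sum_le_sum_of_subset_of_nonneg (Finset.range_mono (by omega))
      fun _ _ _ => by positivity
  have hN : (0 : ℝ) ≤ N := N.cast_nonneg
  have hpos : (0 : ℝ) ≤ 6 / (4 * (J + N) - 3) := by
    apply div_nonneg <;> linarith
  rw [Finset.sum_range_add] at hle
  linarith [tail N]

theorem spread_quadratic {k : ℕ} (hk : 3 ≤ k) : 2 * k ^ 2 + 6 ≤ 3 * spread k + 5 * k := by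
  have : 5 * k ≤ 2 * k ^ 2 + 8 := by nlinarith
  rw [spread, if_neg (by omega)]
  omega

/-- `10⁸ ∑_{i=1}^J 1 / b i`, each term rounded up to an integer; also an upper bound when some
`b i = 0`, as then `1 / b i = 0` in `ℝ`. -/
def scaledSum (b : ℕ → ℕ) : ℕ → ℕ
  | 0 => 0
  | J + 1 => scaledSum b J + (10 ^ 8 / b (J + 1) + 1)

theorem one_div_le_scaled (x : ℕ) : 1 / (x : ℝ) ≤ ((10 ^ 8 / x + 1 : ℕ) : ℝ) / 10 ^ 8 := by
  rcases Nat.eq_zero_or_pos x with rfl | hx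
  · simp
  · have h := (Nat.lt_mul_div_succ (10 ^ 8) hx).le
    have hx' : (0 : ℝ) < x := by exact_mod_cast hx
    rw [div_le_div_iff₀ hx' (by positivity), one_mul, mul_comm]
    exact_mod_cast h

theorem sum_le_scaledSum (b : ℕ → ℕ) (J : ℕ) :
    ∑ i ∈ Finset.range J, 1 / (b (i + 1) : ℝ) ≤ scaledSum b J / 10 ^ 8 := by
  induction J with
  | zero => simp [scaledSum]
  | succ J ih =>
    rw [Finset.sum_range_succ, scaledSum, Nat.cast_add, add_div]
    exact add_le_add ih (one_div_le_scaled _)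

/-! ### Search over Sidon sets containing 1 -/

/-- A lower bound for the `i`-th smallest element above the ladder `P`, when every such element is
at least `c` and `D` lists distinct differences of `P`. The second argument of the outer `max`
uses `q = |D| + i` distinct differences, the members of `D` and the consecutive gaps above `P`,
whose sum is at least `q (q + 1) / 2`. -/
def lower (P D : List ℕ) (c i : ℕ) : ℕ :=
  max (max (1 + spread (P.length + i)) c)
    (P.headD 0 + ((D.length + i) * (D.length + i + 1) / 2 - D.sum))

/-- A branch-and-bound search over the Sidon sets whose elements below `c` are those of `P`; `D`
lists the differences of `P`, `acc` is `10⁸` times the reciprocal sum of `P`, rounded up, and the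
first argument bounds the depth. The next candidate `c` is skipped if it repeats a difference; a
branch is closed if the total bound is below the target; otherwise both the branch without `c` and
the branch with `c` are searched. The target is `10⁸ · 2.2213` less the tail bound
`2531646 = ⌈10⁸ · 6 / (4 · 60 - 3)⌉` beyond `60` further terms. -/
def check : ℕ → List ℕ → List ℕ → ℕ → ℕ → Bool
  | 0, _, _, _, _ => false
  | f + 1, P, D, c, acc =>
    bif P.any fun x => D.elem (c - x) then check f P D (c + 1) acc
    else bif Nat.ble (acc + scaledSum (lower P D c) 60) 219598354 then true
    else check f P D (c + 1) acc &&
      check f (c :: P) (P.map (c - ·) ++ D) (c + 1) (acc + (10 ^ 8 / c + 1))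


/-- The search started from `P = [1]`, whose reciprocal sum scales to `10⁸`. -/
theorem check_root : check 100 [1] [] 2 (10 ^ 8) = true := by decide +kernel

theorem lower_pos (P D : List ℕ) (c i : ℕ) : 0 < lower P D c i := by
  unfold lower; omega

theorem lower_le {S : Set ℕ} (hS : IsSidon S) {m c : ℕ} {P D : List ℕ} (hD : D.Nodup)
    (hDP : ∀ δ ∈ D, IsDiff (m :: P) δ) {x : ℕ} {r : List ℕ} (h : Ladder S (x :: r ++ m :: P))
    (hc : c ≤ x) : lower (m :: P) D c (r.length + 1) ≤ x := by
  have h1 : 1 + spread ((m :: P).length + (r.length + 1)) ≤ x := by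
    have := add_spread_le hS (n := 1) (r := r ++ m :: P) h fun z hz => hS.1 z (h.mem z hz)
    rwa [List.length_append, add_assoc, add_left_comm] at this
  obtain ⟨hm, T, hnd, hdiff, hlen, hsum⟩ := add_sub_le_of_prefix hS hD hDP r x h
  have hq := length_mul_succ_le_two_mul_sum hnd fun δ hδ => (hdiff δ hδ).pos
  rw [hlen] at hq
  unfold lower
  rw [List.headD_cons]
  refine max_le (max_le h1 hc) ?_
  generalize (D.length + (r.length + 1)) * (D.length + (r.length + 1) + 1) = Q at *
  omega

theorem sum_le_of_lower {S : Set ℕ} (hS : IsSidon S) {m c : ℕ} {P D : List ℕ} (hD : D.Nodup)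
    (hDP : ∀ δ ∈ D, IsDiff (m :: P) δ) {t : List ℕ} (h : Ladder S (t ++ m :: P))
    (hc : ∀ x ∈ t, c ≤ x) :
    (t.map fun x : ℕ => 1 / (x : ℝ)).sum ≤
      scaledSum (lower (m :: P) D c) 60 / 10 ^ 8 + 6 / (4 * (60 : ℕ) - 3) := by
  refine (sum_inv_le_of_rank (b := lower (m :: P) D c) (fun i => lower_pos _ _ _ _) t ?_).trans
    ((sum_range_inv_le (J := 60) (by norm_num) ?_ _).trans
      (add_le_add_left (sum_le_scaledSum _ _) _))
  · rintro u x r rfl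
    refine lower_le hS hD hDP ?_ (hc x (by simp))
    rw [List.append_assoc] at h
    exact h.of_append
  · intro i hi
    have h1 : 1 + spread ((m :: P).length + i) ≤ lower (m :: P) D c i :=
      (le_max_left _ _).trans (le_max_left _ _)
    have h2 := spread_quadratic (k := (m :: P).length + i) (by omega)
    generalize (m :: P).length = p at *
    nlinarith

/-- A successful search bounds the reciprocal sum of every ladder that extends `m :: P` by elements
that are at least `c`. -/
theorem check_sound {S : Set ℕ} (hS : IsSidon S) :
    ∀ (f : ℕ) (m : ℕ) (P D : List ℕ) (c acc : ℕ), check f (m :: P) D c acc = true →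
      D.Nodup → (∀ δ ∈ D, IsDiff (m :: P) δ) →
      ((m :: P).map fun x : ℕ => 1 / (x : ℝ)).sum ≤ acc / 10 ^ 8 →
      ∀ t : List ℕ, Ladder S (t ++ m :: P) → (∀ x ∈ t, c ≤ x) →
      ((t ++ m :: P).map fun x : ℕ => 1 / (x : ℝ)).sum ≤ 2.2213 := by
  intro f
  induction f with
  | zero => intro m P D c acc h; simp [check] at h
  | succ f ih =>
    intro m P D c acc h hD hDP hacc t ht hc
    -- A ladder above `P` with elements `≥ c` has last element `c`, or all its elements are `> c`.
    have split : (∃ t', t = t' ++ [c]) ∨ ∀ x ∈ t, c + 1 ≤ x := by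
      rcases List.eq_nil_or_concat' t with rfl | ⟨t', y, rfl⟩
      · simp
      · rcases (hc y (by simp)).eq_or_lt with rfl | hlt
        · exact Or.inl ⟨t', rfl⟩
        · right
          intro x hx
          rcases List.mem_append.1 hx with hx | hx
          · have := (List.pairwise_append.1 (List.pairwise_append.1 ht.desc).1).2.2 x hx y (by simp)
            omega
          · rw [List.mem_singleton.1 hx]; exact hlt
    rw [check] at h
    by_cases hforb : ((m :: P).any fun x => D.elem (c - x)) = true
    · rw [hforb, cond_true] at h
      rcases split with ⟨t', rfl⟩ | hc'
      · obtain ⟨x, hx, hxD⟩ := List.any_eq_true.1 hforb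
        rw [List.append_assoc] at ht
        exact absurd (hDP _ (List.elem_iff.1 hxD)) (Ladder.not_isDiff hS ht.of_append hx)
      · exact ih m P D (c + 1) acc h hD hDP hacc t ht hc'
    · rw [Bool.eq_false_iff.2 hforb, cond_false] at h
      by_cases hle : Nat.ble (acc + scaledSum (lower (m :: P) D c) 60) 219598354 = true
      · have h1 := sum_le_of_lower hS hD hDP ht hc
        have h2 : ((acc + scaledSum (lower (m :: P) D c) 60 : ℕ) : ℝ) ≤ (219598354 : ℕ) := by
          exact_mod_cast Nat.le_of_ble_eq_true hle
        rw [List.map_append, List.sum_append]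
        push_cast at h1 h2
        have h3 : (acc : ℝ) / 10 ^ 8 + scaledSum (lower (m :: P) D c) 60 / 10 ^ 8 ≤
            219598354 / 10 ^ 8 := by
          rw [← add_div]; gcongr
        norm_num at *
        linarith
      · rw [Bool.eq_false_iff.2 hle, cond_false, Bool.and_eq_true] at h
        rcases split with ⟨t', rfl⟩ | hc'
        · have ht' : Ladder S (t' ++ c :: m :: P) := by simpa using ht
          have hcP : Ladder S (c :: m :: P) := ht'.of_append
          have key := ih c (m :: P) ((m :: P).map (c - ·) ++ D) (c + 1) _ h.2 ?_ ?_ ?_ t' ht' ?_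
          · simpa using key
          · refine List.nodup_append.2 ⟨?_, hD, ?_⟩
            · refine (List.nodup_map_iff_inj_on ?_).2 ?_
              · exact hcP.of_cons.desc.imp fun h => (ne_of_gt h)
              · intro x hx y hy hxy
                have := hcP.lt hx
                have := hcP.lt hy
                omega
            · intro a ha b hb hab
              obtain ⟨x, hx, rfl⟩ := List.mem_map.1 ha
              exact hcP.not_isDiff hS hx (hab ▸ hDP b hb)
          · intro δ hδ
            rcases List.mem_append.1 hδ with hδ | hδ
            · obtain ⟨x, hx, rfl⟩ := List.mem_map.1 hδ
              exact ⟨c, by simp, x, List.mem_cons_of_mem _ hx, hcP.lt hx, rfl⟩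
            · exact (hDP δ hδ).mono fun z hz => List.mem_cons_of_mem _ hz
          · rw [List.map_cons, List.sum_cons, Nat.cast_add, add_div, add_comm]
            exact add_le_add hacc (one_div_le_scaled c)
          · intro x hx
            exact (List.pairwise_append.1 ht'.desc).2.2 x hx c (by simp)
        · exact ih m P D (c + 1) acc h.1 hD hDP hacc t ht hc'

/-! ### The range 2 ≤ n ≤ 9 -/

theorem sum_le_sum_spread {S : Set ℕ} (hS : IsSidon S) {n : ℕ} (hn : 0 < n) {l : List ℕ}
    (h : Ladder S l) (hl : ∀ x ∈ l, n ≤ x) :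
    (l.map fun x : ℕ => 1 / (x : ℝ)).sum ≤
      ∑ i ∈ Finset.range l.length, 1 / ((n + spread (i + 1) : ℕ) : ℝ) := by
  refine sum_inv_le_of_rank (b := fun i => n + spread i) (fun i => by omega) l ?_
  rintro u x r rfl
  exact add_spread_le hS h.of_append fun z hz => hl z (List.mem_append_right _ hz)

/-- The square of the inequality `sum · √(2n) ≤ 3.14`, scaled by `10⁸`;
`2531646 = ⌈10⁸ · 6 / (4 · 60 - 3)⌉` bounds the tail beyond `60` terms. -/
theorem scaledSum_small : ∀ n < 10, 2 ≤ n →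
    2 * n * (scaledSum (fun i => n + spread i) 60 + 2531646) ^ 2 ≤ 314 ^ 2 * 10 ^ 12 := by
  decide +kernel

theorem sum_spread_le_small {n : ℕ} (h2 : 2 ≤ n) (h10 : n < 10) (N : ℕ) :
    ∑ i ∈ Finset.range N, 1 / ((n + spread (i + 1) : ℕ) : ℝ) ≤ Real.pi / √(2 * n) := by
  have h1 := sum_range_inv_le (b := fun i => n + spread i) (J := 60) (by norm_num)
    (fun i hi => by have := spread_quadratic (k := i) (by omega); omega) N
  have h3 := sum_le_scaledSum (fun i => n + spread i) 60
  have h4 := scaledSum_small n h10 h2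
  set A := scaledSum (fun i => n + spread i) 60
  have h5 : (2 * n * (A + 2531646) ^ 2 : ℝ) ≤ 314 ^ 2 * 10 ^ 12 := by exact_mod_cast h4
  have hpi := Real.pi_gt_d2
  have hn : (0 : ℝ) < 2 * n := by positivity
  have hw : 0 < √(2 * n : ℝ) := Real.sqrt_pos.2 hn
  have hA : (0 : ℝ) ≤ A := A.cast_nonneg
  have h6 : (A + 2531646) * √(2 * n : ℝ) ≤ 314 * 10 ^ 6 := by
    refine le_of_sq_le_sq ?_ (by norm_num)
    rw [mul_pow, Real.sq_sqrt hn.le]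
    linarith
  rw [le_div_iff₀ hw]
  have h7 : ∑ i ∈ Finset.range N, 1 / ((n + spread (i + 1) : ℕ) : ℝ) ≤ (A + 2531646) / 10 ^ 8 := by
    norm_num at h1 h3 ⊢
    linarith
  calc _ ≤ (A + 2531646) / 10 ^ 8 * √(2 * n : ℝ) := by gcongr
    _ ≤ Real.pi := by linarith

/-! ### The range n ≥ 10: comparison with arctangents -/

theorem sub_cube_le_arctan {a : ℝ} (ha : 0 ≤ a) : a - a ^ 3 / 3 ≤ Real.arctan a := by
  have h (x : ℝ) : HasDerivAt (fun x : ℝ => Real.arctan x - (x - x ^ 3 / 3))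
      (1 / (1 + x ^ 2) - (1 - (3 : ℕ) * x ^ (3 - 1) / 3)) x :=
    (Real.hasDerivAt_arctan x).fun_sub
      ((hasDerivAt_id' x).fun_sub ((hasDerivAt_pow 3 x).div_const 3))
  have hmono : Monotone fun x : ℝ => Real.arctan x - (x - x ^ 3 / 3) := by
    refine monotone_of_deriv_nonneg (fun x => (h x).differentiableAt) fun x => ?_
    rw [(h x).deriv]
    have hx : (0 : ℝ) < 1 + x ^ 2 := by positivity
    have e : 1 / (1 + x ^ 2) - (1 - (3 : ℕ) * x ^ (3 - 1) / 3) = x ^ 4 / (1 + x ^ 2) := by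
      push_cast; field_simp; ring
    rw [e]; positivity
  have := hmono ha
  simp at this
  linarith

/-- Since `arctan ((k+1)/w) - arctan (k/w) = arctan (w / (w² + k(k+1)))` with `w = √(2n)`, the
reciprocal of `n + k(k+1)/2` is an arctangent increment up to the cubic error of `arctan a ≈ a`. -/
theorem arctan_step {n : ℝ} (hn : 0 < n) {k : ℝ} (hk : 0 ≤ k) :
    2 / (2 * n + k * (k + 1)) - 4 * n / (3 * (2 * n + k * (k + 1)) ^ 3) ≤
      2 / √(2 * n) * (Real.arctan ((k + 1) / √(2 * n)) - Real.arctan (k / √(2 * n))) := by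
  set w := √(2 * n) with hw
  have hw0 : 0 < w := Real.sqrt_pos.2 (by linarith)
  have hw2 : w ^ 2 = 2 * n := Real.sq_sqrt (by linarith)
  have hD : 0 < 2 * n + k * (k + 1) := by positivity
  set a := w / (2 * n + k * (k + 1)) with ha
  have ha0 : 0 < a := by positivity
  have hadd : Real.arctan (k / w) + Real.arctan a = Real.arctan ((k + 1) / w) := by
    have hlt : k / w * a = k / (2 * n + k * (k + 1)) := by rw [ha]; field_simp
    have h1 : k / (2 * n + k * (k + 1)) < 1 := by
      rw [div_lt_one hD]; nlinarith [mul_nonneg hk hk]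
    rw [Real.arctan_add (by rw [hlt]; exact h1), hlt]
    congr 1
    have h2 : 1 - k / (2 * n + k * (k + 1)) = (2 * n + k ^ 2) / (2 * n + k * (k + 1)) := by
      field_simp; ring
    have h3 : 0 < 2 * n + k ^ 2 := by positivity
    rw [h2, ha, ← hw2]
    rw [← hw2] at hD h3
    field_simp
    ring
  have hle := sub_cube_le_arctan ha0.le
  have heq : 2 / w * (a - a ^ 3 / 3) =
      2 / (2 * n + k * (k + 1)) - 4 * n / (3 * (2 * n + k * (k + 1)) ^ 3) := by
    rw [ha, show 4 * n = 2 * w ^ 2 by linarith, ← hw2]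
    rw [← hw2] at hD
    field_simp
  rw [← heq, ← hadd, add_sub_cancel_left]
  gcongr

/-- The increments telescope, and `arctan < π / 2`. -/
theorem sum_arctan_step_le {n : ℝ} (N : ℕ) :
    ∑ i ∈ Finset.range N, 2 / √(2 * n) *
      (Real.arctan (((i : ℝ) + 1) / √(2 * n)) - Real.arctan (i / √(2 * n))) ≤
      Real.pi / √(2 * n) := by
  rw [← Finset.mul_sum]
  have := Finset.sum_range_sub (fun i : ℕ => Real.arctan ((i : ℝ) / √(2 * n))) N
  push_cast at this
  rw [this]
  have h := Real.arctan_lt_pi_div_two ((N : ℝ) / √(2 * n))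
  simp only [zero_div, Real.arctan_zero, sub_zero]
  calc 2 / √(2 * n) * Real.arctan (N / √(2 * n)) ≤ 2 / √(2 * n) * (Real.pi / 2) := by gcongr
    _ = Real.pi / √(2 * n) := by ring

/-- One unit of excess of the spread over `k(k+1)/2` already pays for the cubic error. -/
theorem term_le_step {n : ℝ} (hn : 1 ≤ n) {s k : ℝ} (hk : 0 ≤ k) (hs : k * (k + 1) / 2 + 1 ≤ s) :
    1 / (n + s) ≤ 2 / (2 * n + k * (k + 1)) - 4 * n / (3 * (2 * n + k * (k + 1)) ^ 3) := by
  have hkk : 0 ≤ k * (k + 1) := by positivity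
  generalize k * (k + 1) = q at *
  have h1 : 1 / (n + s) ≤ 2 / (2 * n + q + 2) := by
    rw [div_le_div_iff₀ (by linarith) (by linarith)]; linarith
  have h2 : 4 * n / (3 * (2 * n + q) ^ 3) ≤ 2 / (3 * (2 * n + q) ^ 2) := by
    rw [div_le_div_iff₀ (by positivity) (by positivity)]
    have : 0 ≤ (2 * n + q) ^ 2 * q := by positivity
    nlinarith
  have h3 : 2 / (2 * n + q + 2) + 2 / (3 * (2 * n + q) ^ 2) ≤ 2 / (2 * n + q) := by
    have : (2:ℝ) ≤ 2 * n + q := by linarith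
    generalize 2 * n + q = d at *
    rw [div_add_div _ _ (by positivity) (by positivity),
      div_le_div_iff₀ (by positivity) (by positivity)]
    nlinarith [mul_nonneg (show (0:ℝ) ≤ d by linarith) (show (0:ℝ) ≤ d - 2 by linarith)]
  linarith

/-- Without any excess over `k(k+1)/2 = q/2`, the cubic error is at most `1 / (6n²)`. -/
theorem loss {n q : ℝ} (hn : 10 ≤ n) (hq : 0 ≤ q) :
    1 / (n + q / 2) - 1 / (6 * n ^ 2) ≤ 2 / (2 * n + q) - 4 * n / (3 * (2 * n + q) ^ 3) := by
  have h1 : 1 / (n + q / 2) = 2 / (2 * n + q) := by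
    field_simp
  have h2 : 4 * n / (3 * (2 * n + q) ^ 3) ≤ 4 * n / (3 * (2 * n) ^ 3) := by
    gcongr; linarith
  have h3 : 4 * n / (3 * (2 * n) ^ 3) = 1 / (6 * n ^ 2) := by field_simp; norm_num
  linarith

/-- The first four elements have no excess over `k(k+1)/2` and lose at most `4 / (6n²)` in total;
the next four, with spreads `11, 16, 23, 32` against `10, 15, 21, 28`, gain at least
`(0.19 + 0.12 + 0.17 + 0.22) / n²` beyond their own cubic errors, which is more. -/
theorem sum_eight {n : ℝ} (hn : 10 ≤ n) :
    ∑ i ∈ Finset.range 8, 1 / (n + (spread (i + 1) : ℝ)) ≤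
    ∑ i ∈ Finset.range 8, (2 / (2 * n + (i : ℝ) * (i + 1)) -
      4 * n / (3 * (2 * n + (i : ℝ) * (i + 1)) ^ 3)) := by
  have gain : ∀ q s c : ℝ, q = 20 ∧ s = 11 ∧ c = 19 / 100 ∨ q = 30 ∧ s = 16 ∧ c = 12 / 100 ∨
      q = 42 ∧ s = 23 ∧ c = 17 / 100 ∨ q = 56 ∧ s = 32 ∧ c = 22 / 100 →
      1 / (n + s) + c / n ^ 2 ≤ 2 / (2 * n + q) - 4 * n / (3 * (2 * n + q) ^ 3) := by
    obtain ⟨t, rfl⟩ : ∃ t, n = t + 10 := ⟨n - 10, by ring⟩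
    have ht : 0 ≤ t := by linarith
    rintro q s c (⟨rfl, rfl, rfl⟩ | ⟨rfl, rfl, rfl⟩ | ⟨rfl, rfl, rfl⟩ | ⟨rfl, rfl, rfl⟩) <;>
    · rw [div_add_div _ _ (by positivity) (by positivity),
        div_sub_div _ _ (by positivity) (by positivity),
        div_le_div_iff₀ (by positivity) (by positivity), ← sub_nonneg]
      -- As polynomials in `t = n - 10`, the differences have nonnegative coefficients.
      ring_nf
      positivity
  have g5 := gain 20 11 _ (Or.inl ⟨rfl, rfl, rfl⟩)
  have g6 := gain 30 16 _ (Or.inr (Or.inl ⟨rfl, rfl, rfl⟩))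
  have g7 := gain 42 23 _ (Or.inr (Or.inr (Or.inl ⟨rfl, rfl, rfl⟩)))
  have g8 := gain 56 32 _ (Or.inr (Or.inr (Or.inr ⟨rfl, rfl, rfl⟩)))
  have l1 := loss (q := 0) hn (by norm_num)
  have l2 := loss (q := 2) hn (by norm_num)
  have l3 := loss (q := 6) hn (by norm_num)
  have l4 := loss (q := 12) hn (by norm_num)
  have hc : 4 * (1 / (6 * n ^ 2)) ≤ 19 / 100 / n ^ 2 + 12 / 100 / n ^ 2 + 17 / 100 / n ^ 2 +
      22 / 100 / n ^ 2 := by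
    have : 0 ≤ 1 / n ^ 2 := by positivity
    rw [show 4 * (1 / (6 * n ^ 2)) = 2 / 3 * (1 / n ^ 2) by field_simp; norm_num]
    have e : ∀ c : ℝ, c / n ^ 2 = c * (1 / n ^ 2) := fun c => by ring
    simp only [e (19 / 100), e (12 / 100), e (17 / 100), e (22 / 100)]
    linarith
  norm_num [Finset.sum_range_succ, spread] at *
  linarith

theorem spread_excess {i : ℕ} (hi : 4 ≤ i) : (i : ℝ) * (i + 1) / 2 + 1 ≤ spread (i + 1) := by
  have h : i * (i + 1) + 2 ≤ 2 * spread (i + 1) := by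
    obtain ⟨j, rfl⟩ := Nat.exists_eq_add_of_le hi
    have h2 : Even ((4 + j) * (4 + j + 1)) := Nat.even_mul_succ_self _
    have := spread_quadratic (k := 4 + j + 1) (by omega)
    obtain ⟨q, hq⟩ := h2
    have : 0 ≤ j * j := by positivity
    ring_nf at *
    omega
  have : (i : ℝ) * (i + 1) + 2 ≤ 2 * spread (i + 1) := by exact_mod_cast h
  linarith

theorem sum_spread_le_large {n : ℕ} (h10 : 10 ≤ n) (N : ℕ) :
    ∑ i ∈ Finset.range N, 1 / ((n + spread (i + 1) : ℕ) : ℝ) ≤ Real.pi / √(2 * n) := by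
  have hn : (10 : ℝ) ≤ n := by exact_mod_cast h10
  have hle : ∑ i ∈ Finset.range N, 1 / ((n + spread (i + 1) : ℕ) : ℝ) ≤
      ∑ i ∈ Finset.range (8 + N), 1 / ((n + spread (i + 1) : ℕ) : ℝ) :=
    Finset.sum_le_sum_of_subset_of_nonneg (Finset.range_mono (by omega))
      fun _ _ _ => by positivity
  refine hle.trans (le_trans ?_ (sum_arctan_step_le (8 + N)))
  refine le_trans ?_ (Finset.sum_le_sum fun i _ =>
    arctan_step (n := n) (by linarith) (k := i) i.cast_nonneg)
  simp only [Nat.cast_add]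
  rw [Finset.sum_range_add, Finset.sum_range_add]
  refine add_le_add (sum_eight hn) (Finset.sum_le_sum fun i _ => ?_)
  exact term_le_step (by linarith) (Nat.cast_nonneg _) (spread_excess (by omega))

/-! ### All ladders, and the infinite sum -/

theorem sum_le_of_two_le {S : Set ℕ} (hS : IsSidon S) {n : ℕ} (hn : 2 ≤ n) {l : List ℕ}
    (h : Ladder S l) (hl : ∀ x ∈ l, n ≤ x) :
    (l.map fun x : ℕ => 1 / (x : ℝ)).sum ≤ Real.pi / √(2 * n) := by
  refine (sum_le_sum_spread hS (by omega) h hl).trans ?_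
  rcases lt_or_ge n 10 with h10 | h10
  · exact sum_spread_le_small hn h10 _
  · exact sum_spread_le_large h10 _

theorem sum_le_of_one {S : Set ℕ} (hS : IsSidon S) {l : List ℕ} (h : Ladder S l) :
    (l.map fun x : ℕ => 1 / (x : ℝ)).sum ≤ Real.pi / √(2 * (1 : ℕ)) := by
  have hsqrt : √(2 * (1 : ℕ) : ℝ) ≤ 1.41422 := by
    rw [Real.sqrt_le_left (by norm_num)]; norm_num
  have hpi := Real.pi_gt_d4
  -- `π / √2 = 2.22144…`
  have hbound : 2.2213 ≤ Real.pi / √(2 * (1 : ℕ)) := by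
    rw [le_div_iff₀ (Real.sqrt_pos.2 (by norm_num))]
    nlinarith
  have htwo : ∀ l' : List ℕ, Ladder S l' → (∀ x ∈ l', 2 ≤ x) →
      (l'.map fun x : ℕ => 1 / (x : ℝ)).sum ≤ Real.pi / √(2 * (1 : ℕ)) := fun l' h' hl' =>
    (sum_le_of_two_le hS le_rfl h' hl').trans (by
      have := Real.pi_pos
      gcongr
      norm_num)
  rcases List.eq_nil_or_concat' l with rfl | ⟨t, y, rfl⟩
  · exact htwo [] h (by simp)
  · have hlt : ∀ x ∈ t, y < x := fun x hx => (List.pairwise_append.1 h.desc).2.2 x hx y (by simp)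
    have hy : 0 < y := hS.1 y (h.mem y (by simp))
    rcases (show 1 ≤ y from hy).eq_or_lt with rfl | hy2
    · exact (check_sound hS 100 1 [] [] 2 (10 ^ 8) check_root (by simp) (by simp) (by norm_num) t h
        hlt).trans hbound
    · refine htwo _ h fun x hx => ?_
      rcases List.mem_append.1 hx with hx | hx
      · have := hlt x hx
        omega
      · rw [List.mem_singleton.1 hx]; exact hy2

theorem tail_recip_sum_le (S : Set ℕ) (hS : IsSidon S) (n : ℕ) (hn : 0 < n) :
    (∑' s : ↥(S ∩ Set.Ici n), (1 : ℝ≥0∞) / ((s : ℕ))) ≤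
      ENNReal.ofReal (Real.pi / Real.sqrt (2 * n)) := by
  rw [ENNReal.tsum_eq_iSup_sum]
  refine iSup_le fun F => ?_
  set G : Finset ℕ := F.map (Function.Embedding.subtype _) with hG
  have hmem : ∀ x ∈ G.sort (· ≥ ·), x ∈ S ∧ n ≤ x := by
    intro x hx
    rw [Finset.mem_sort, hG, Finset.mem_map] at hx
    obtain ⟨y, -, rfl⟩ := hx
    exact y.2
  have hlad : Ladder S (G.sort (· ≥ ·)) := ⟨G.sortedGT_sort.pairwise, fun x hx => (hmem x hx).1⟩
  have hreal : ∑ x ∈ G, 1 / (x : ℝ) ≤ Real.pi / √(2 * n) := by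
    have key : ((G.sort (· ≥ ·)).map fun x : ℕ => 1 / (x : ℝ)).sum ≤ Real.pi / √(2 * n) := by
      rcases (show 1 ≤ n from hn).eq_or_lt with rfl | h2
      · exact sum_le_of_one hS hlad
      · exact sum_le_of_two_le hS h2 hlad fun x hx => (hmem x hx).2
    rwa [← List.sum_toFinset _ (Finset.sort_nodup _ _), Finset.sort_toFinset] at key
  calc ∑ s ∈ F, (1 : ℝ≥0∞) / ((s : ℕ)) = ∑ x ∈ G, (1 : ℝ≥0∞) / (x : ℕ) := by
        rw [hG, Finset.sum_map]; rfl
    _ = ∑ x ∈ G, ENNReal.ofReal (1 / (x : ℝ)) := by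
        refine Finset.sum_congr rfl fun x hx => ?_
        have hx0 : 0 < x := hn.trans_le (hmem x ((Finset.mem_sort _).2 hx)).2
        rw [ENNReal.ofReal_div_of_pos (by exact_mod_cast hx0), ENNReal.ofReal_one,
          ENNReal.ofReal_natCast]
    _ = ENNReal.ofReal (∑ x ∈ G, 1 / (x : ℝ)) :=
        (ENNReal.ofReal_sum_of_nonneg fun _ _ => by positivity).symm
    _ ≤ _ := ENNReal.ofReal_le_ofReal hreal
end
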